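/- Let f(x) = x·(e^{m·x} + c), and for each i ∈ {0,1,2} let t_i = t_i(n) be the unique positive real number with f(t_i) = n + i. Then as n → ∞, 1/t_0 + 1/t_2 − 2/t_1 = O(1/(n²·log² n)). -/

import Mathlib

open Filter

/-!
Put `f x = x * (exp (m * x) + c)`. Since `f t₀, f t₁, f t₂` are in arithmetic progression, two
applications of Cauchy's mean value theorem bound the second difference of `1 / t` by the second
derivative of `1 / x` *with respect to* `f`, without introducing the inverse function of `f`.
That derivative is `(2 / x + f'' / f') / (x * f') ^ 2`, which is `O(1 / (x * f x) ^ 2)` for `1 ≤ x`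
because `f'' ≤ 2 * m * f'` and `f` is bounded by a multiple of `f'`. Finally `log (f x) = O(x)`.
-/

open Set Asymptotics

section SecondDifference

variable {F φ ψ f f' f'' : ℝ → ℝ} {a b d h : ℝ}

lemma exists_sub_eq_mul_sub_of_hasDerivAt (hab : a < b)
    (hf : ∀ x ∈ Icc a b, HasDerivAt f (f' x) x) (hf' : ∀ x ∈ Ioo a b, f' x ≠ 0)
    (hF : ∀ x ∈ Icc a b, HasDerivAt F (φ x * f' x) x) :
    ∃ x ∈ Ioo a b, F b - F a = φ x * (f b - f a) := by
  obtain ⟨x, hx, hslope⟩ := exists_ratio_hasDerivAt_eq_ratio_slope F (fun x ↦ φ x * f' x) hab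
    (HasDerivAt.continuousOn hF) (fun x hx ↦ hF x (Ioo_subset_Icc_self hx)) f f'
    (HasDerivAt.continuousOn hf) (fun x hx ↦ hf x (Ioo_subset_Icc_self hx))
  exact ⟨x, hx, mul_right_cancel₀ (hf' x hx) (by linear_combination -hslope)⟩

/- Here `φ` and `ψ` are the first and second derivatives of `F` with respect to `f`. -/
lemma exists_second_difference_eq (hab : a < b) (hbd : b < d)
    (hf : ∀ x ∈ Icc a d, HasDerivAt f (f' x) x) (hf' : ∀ x ∈ Icc a d, f' x ≠ 0)
    (hF : ∀ x ∈ Icc a d, HasDerivAt F (φ x * f' x) x)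
    (hφ : ∀ x ∈ Icc a d, HasDerivAt φ (ψ x * f' x) x)
    (hfab : f b - f a = h) (hfbd : f d - f b = h) :
    ∃ p q r, a < p ∧ p < r ∧ r < q ∧ q < d ∧
      F a + F d - 2 * F b = ψ r * (f q - f p) * h := by
  have mean_value {G γ : ℝ → ℝ} (hG : ∀ x ∈ Icc a d, HasDerivAt G (γ x * f' x) x) {u v : ℝ}
      (hau : a ≤ u) (huv : u < v) (hvd : v ≤ d) : ∃ x ∈ Ioo u v, G v - G u = γ x * (f v - f u) :=
    have hsub : Icc u v ⊆ Icc a d := Icc_subset_Icc hau hvd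
    exists_sub_eq_mul_sub_of_hasDerivAt huv (fun x hx ↦ hf x (hsub hx))
      (fun x hx ↦ hf' x (hsub (Ioo_subset_Icc_self hx))) (fun x hx ↦ hG x (hsub hx))
  obtain ⟨p, ⟨hap, hpb⟩, hp⟩ := mean_value hF le_rfl hab hbd.le
  obtain ⟨q, ⟨hbq, hqd⟩, hq⟩ := mean_value hF hab.le hbd le_rfl
  obtain ⟨r, ⟨hpr, hrq⟩, hr⟩ := mean_value hφ hap.le (hpb.trans hbq) hqd.le
  refine ⟨p, q, r, hap, hpr, hrq, hqd, ?_⟩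
  rw [hfab] at hp
  rw [hfbd] at hq
  linear_combination hq - hp + h * hr

lemma abs_second_difference_le {C : ℝ} (hab : a < b) (hbd : b < d)
    (hf : ∀ x ∈ Icc a d, HasDerivAt f (f' x) x) (hf' : ∀ x ∈ Icc a d, 0 < f' x)
    (hF : ∀ x ∈ Icc a d, HasDerivAt F (φ x * f' x) x)
    (hφ : ∀ x ∈ Icc a d, HasDerivAt φ (ψ x * f' x) x) (hψ : ∀ x ∈ Icc a d, |ψ x| ≤ C)
    (hfab : f b - f a = h) (hfbd : f d - f b = h) :
    |F a + F d - 2 * F b| ≤ 2 * C * h ^ 2 := by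
  have hmono : StrictMonoOn f (Icc a d) :=
    strictMonoOn_of_hasDerivWithinAt_pos (convex_Icc a d) (HasDerivAt.continuousOn hf)
      (fun x hx ↦ (hf x (interior_subset hx)).hasDerivWithinAt)
      (fun x hx ↦ hf' x (interior_subset hx))
  obtain ⟨p, q, r, hap, hpr, hrq, hqd, hsum⟩ :=
    exists_second_difference_eq hab hbd hf (fun x hx ↦ (hf' x hx).ne') hF hφ hfab hfbd
  have hpq : p < q := hpr.trans hrq
  have hp : p ∈ Icc a d := ⟨hap.le, (hpq.trans hqd).le⟩
  have hq : q ∈ Icc a d := ⟨(hap.trans hpq).le, hqd.le⟩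
  have hfa : f a < f p := hmono (left_mem_Icc.2 (hab.trans hbd).le) hp hap
  have hfpq : f p < f q := hmono hp hq hpq
  have hfd : f q < f d := hmono hq (right_mem_Icc.2 (hab.trans hbd).le) hqd
  have hh : 0 < h := by linarith
  have hψr : |ψ r| ≤ C := hψ r ⟨(hap.trans hpr).le, (hrq.trans hqd).le⟩
  have hC : 0 ≤ C := (abs_nonneg _).trans hψr
  calc |F a + F d - 2 * F b| = |ψ r| * (f q - f p) * h := by
        rw [hsum, abs_mul, abs_mul, abs_of_pos (sub_pos.2 hfpq), abs_of_pos hh]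
    _ ≤ C * (2 * h) * h := by
        gcongr
        linarith
    _ = 2 * C * h ^ 2 := by ring

lemma hasDerivAt_neg_inv_sq_mul {g : ℝ → ℝ} {g' x : ℝ} (hg : HasDerivAt g g' x) (hx : x ≠ 0)
    (hgx : g x ≠ 0) :
    HasDerivAt (fun y ↦ -(y ^ 2 * g y)⁻¹) ((2 / x + g' / g x) / (x * g x) ^ 2 * g x) x := by
  refine (((hasDerivAt_pow 2 x).fun_mul hg).fun_inv (by positivity)).fun_neg.congr_deriv ?_
  push_cast
  field_simp

lemma abs_second_difference_inv_le {K L : ℝ} (ha : 0 < a) (hab : a < b) (hbd : b < d)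
    (hf : ∀ x ∈ Icc a d, HasDerivAt f (f' x) x) (hf' : ∀ x ∈ Icc a d, HasDerivAt f' (f'' x) x)
    (hL : 0 < L) (hLf' : ∀ x ∈ Icc a d, L ≤ f' x) (hKf'' : ∀ x ∈ Icc a d, |f'' x| ≤ K * f' x)
    (hfab : f b - f a = h) (hfbd : f d - f b = h) :
    |1 / a + 1 / d - 2 / b| ≤ 2 * ((2 / a + K) / (a * L) ^ 2) * h ^ 2 := by
  have hpos : ∀ x ∈ Icc a d, 0 < x := fun x hx ↦ ha.trans_le hx.1
  have hf'_pos : ∀ x ∈ Icc a d, 0 < f' x := fun x hx ↦ hL.trans_le (hLf' x hx)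
  have hinv : ∀ x ∈ Icc a d, HasDerivAt (fun y : ℝ ↦ y⁻¹) (-(x ^ 2 * f' x)⁻¹ * f' x) x := by
    intro x hx
    have hx0 := (hpos x hx).ne'
    have hf'x := (hf'_pos x hx).ne'
    exact (hasDerivAt_inv hx0).congr_deriv (by field_simp)
  have hbound : ∀ x ∈ Icc a d,
      |(2 / x + f'' x / f' x) / (x * f' x) ^ 2| ≤ (2 / a + K) / (a * L) ^ 2 := by
    intro x hx
    have hx0 := hpos x hx
    have hf'x := hf'_pos x hx
    have hnum : |2 / x + f'' x / f' x| ≤ 2 / a + K := by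
      refine (abs_add_le _ _).trans (add_le_add ?_ ?_)
      · rw [abs_of_pos (by positivity)]
        exact div_le_div_of_nonneg_left zero_le_two ha hx.1
      · rw [abs_div, abs_of_pos hf'x]
        exact (div_le_iff₀ hf'x).2 (hKf'' x hx)
    rw [abs_div, abs_of_pos (by positivity : 0 < (x * f' x) ^ 2)]
    exact div_le_div₀ ((abs_nonneg _).trans hnum) hnum (by positivity)
      (pow_le_pow_left₀ (by positivity) (mul_le_mul hx.1 (hLf' x hx) hL.le hx0.le) 2)
  simpa only [one_div, div_eq_mul_inv (2 : ℝ) b] using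
    abs_second_difference_le hab hbd hf hf'_pos hinv
      (fun x hx ↦ hasDerivAt_neg_inv_sq_mul (hf' x hx) (hpos x hx).ne' (hf'_pos x hx).ne')
      hbound hfab hfbd

end SecondDifference

/-- The function `f` of the theorem, with real parameters `m` and `c`. -/
noncomputable def mulExpAdd (m c x : ℝ) : ℝ := x * (Real.exp (m * x) + c)

/-- The derivative of `mulExpAdd m c`, in closed form. -/
noncomputable def mulExpAddDeriv (m c x : ℝ) : ℝ := (1 + m * x) * Real.exp (m * x) + c

section MulExpAdd

variable {m c x : ℝ}

lemma hasDerivAt_exp_const_mul (m x : ℝ) :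
    HasDerivAt (fun y ↦ Real.exp (m * y)) (Real.exp (m * x) * m) x :=
  (hasDerivAt_const_mul m).exp

lemma hasDerivAt_mulExpAdd (m c x : ℝ) :
    HasDerivAt (mulExpAdd m c) (mulExpAddDeriv m c x) x := by
  refine ((hasDerivAt_id' x).fun_mul
    ((hasDerivAt_exp_const_mul m x).add_const c)).congr_deriv ?_
  unfold mulExpAddDeriv
  ring

lemma hasDerivAt_mulExpAddDeriv (m c x : ℝ) :
    HasDerivAt (mulExpAddDeriv m c) (m * (2 + m * x) * Real.exp (m * x)) x := by
  refine ((((hasDerivAt_const_mul m).const_add 1).fun_mul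
    (hasDerivAt_exp_const_mul m x)).add_const c).congr_deriv ?_
  ring

lemma mulExpAddDeriv_pos (hm : 0 ≤ m) (hc : 0 ≤ c) (hx : 0 ≤ x) : 0 < mulExpAddDeriv m c x := by
  unfold mulExpAddDeriv
  positivity

lemma strictMonoOn_mulExpAdd (hm : 0 ≤ m) (hc : 0 ≤ c) : StrictMonoOn (mulExpAdd m c) (Ici 0) :=
  strictMonoOn_of_hasDerivWithinAt_pos (convex_Ici 0)
    (HasDerivAt.continuousOn fun x _ ↦ hasDerivAt_mulExpAdd m c x)
    (fun x _ ↦ (hasDerivAt_mulExpAdd m c x).hasDerivWithinAt)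
    (fun _ hx ↦ mulExpAddDeriv_pos hm hc (interior_subset hx))

lemma mulExpAdd_pos (hc : 0 ≤ c) (hx : 0 < x) : 0 < mulExpAdd m c x := by
  unfold mulExpAdd
  positivity

lemma mulExpAdd_le (hm : 0 ≤ m) (hc : 0 ≤ c) (hx : 0 ≤ x) :
    mulExpAdd m c x ≤ (1 + c) * (x * Real.exp (m * x)) := by
  have hexp : 1 ≤ Real.exp (m * x) := Real.one_le_exp (by positivity)
  calc mulExpAdd m c x ≤ x * (Real.exp (m * x) + c * Real.exp (m * x)) := by
        unfold mulExpAdd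
        gcongr
        exact le_mul_of_one_le_right hc hexp
    _ = (1 + c) * (x * Real.exp (m * x)) := by ring

lemma mul_mulExpAdd_le_mulExpAddDeriv (hm : 0 ≤ m) (hc : 0 ≤ c) (hx : 0 ≤ x) :
    m / (1 + c) * mulExpAdd m c x ≤ mulExpAddDeriv m c x := by
  calc m / (1 + c) * mulExpAdd m c x
      ≤ m / (1 + c) * ((1 + c) * (x * Real.exp (m * x))) := by
        gcongr
        exact mulExpAdd_le hm hc hx
    _ = m * x * Real.exp (m * x) := by field_simp
    _ ≤ mulExpAddDeriv m c x := by
        unfold mulExpAddDeriv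
        linarith [Real.exp_pos (m * x)]

lemma abs_deriv_mulExpAddDeriv_le (hm : 0 ≤ m) (hc : 0 ≤ c) (hx : 0 ≤ x) :
    |m * (2 + m * x) * Real.exp (m * x)| ≤ 2 * m * mulExpAddDeriv m c x := by
  rw [abs_of_nonneg (by positivity), ← sub_nonneg]
  calc 0 ≤ m * (m * x * Real.exp (m * x) + 2 * c) := by positivity
    _ = 2 * m * mulExpAddDeriv m c x - m * (2 + m * x) * Real.exp (m * x) := by
        unfold mulExpAddDeriv
        ring

lemma log_mulExpAdd_le (hm : 0 ≤ m) (hc : 0 ≤ c) (hx : 1 ≤ x) :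
    Real.log (mulExpAdd m c x) ≤ (1 + m + c) * x := by
  have hx0 : 0 < x := zero_lt_one.trans_le hx
  refine (Real.log_le_iff_le_exp (mulExpAdd_pos hc hx0)).2 ?_
  calc mulExpAdd m c x ≤ (1 + c) * (x * Real.exp (m * x)) := mulExpAdd_le hm hc hx0.le
    _ ≤ Real.exp (c * x) * (Real.exp x * Real.exp (m * x)) := by
        gcongr
        · linarith [Real.add_one_le_exp (c * x), le_mul_of_one_le_right hc hx]
        · linarith [Real.add_one_le_exp x]
    _ = Real.exp ((1 + m + c) * x) := by
        rw [← Real.exp_add, ← Real.exp_add]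
        ring_nf

lemma abs_second_difference_inv_le_of_mulExpAdd {a b d h : ℝ} (hm : 0 < m) (hc : 0 ≤ c)
    (ha : 1 ≤ a) (hab : a < b) (hbd : b < d) (hfab : mulExpAdd m c b - mulExpAdd m c a = h)
    (hfbd : mulExpAdd m c d - mulExpAdd m c b = h) :
    |1 / a + 1 / d - 2 / b| ≤
      4 * (1 + m) * ((1 + c) / m) ^ 2 * h ^ 2 * (1 / (mulExpAdd m c a * a) ^ 2) := by
  have ha0 : 0 < a := zero_lt_one.trans_le ha
  have hfa := mulExpAdd_pos (m := m) hc ha0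
  have hnonneg : ∀ x ∈ Icc a d, 0 ≤ x := fun x hx ↦ ha0.le.trans hx.1
  have hderiv : ∀ x ∈ Icc a d, m / (1 + c) * mulExpAdd m c a ≤ mulExpAddDeriv m c x := by
    intro x hx
    refine le_trans ?_ (mul_mulExpAdd_le_mulExpAddDeriv hm.le hc (hnonneg x hx))
    gcongr
    exact (strictMonoOn_mulExpAdd hm.le hc).monotoneOn ha0.le (hnonneg x hx) hx.1
  calc |1 / a + 1 / d - 2 / b|
      ≤ 2 * ((2 / a + 2 * m) / (a * (m / (1 + c) * mulExpAdd m c a)) ^ 2) * h ^ 2 :=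
        abs_second_difference_inv_le ha0 hab hbd (fun x _ ↦ hasDerivAt_mulExpAdd m c x)
          (fun x _ ↦ hasDerivAt_mulExpAddDeriv m c x) (by positivity) hderiv
          (fun x hx ↦ abs_deriv_mulExpAddDeriv_le hm.le hc (hnonneg x hx)) hfab hfbd
    _ ≤ 2 * ((2 + 2 * m) / (a * (m / (1 + c) * mulExpAdd m c a)) ^ 2) * h ^ 2 := by
        gcongr
        exact div_le_self zero_le_two ha
    _ = 4 * (1 + m) * ((1 + c) / m) ^ 2 * h ^ 2 * (1 / (mulExpAdd m c a * a) ^ 2) := by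
        field_simp
        ring

end MulExpAdd

theorem stmt_14_general {ι : Type*} {l : Filter ι} {m c : ℝ} (hm : 0 < m) (hc : 0 ≤ c)
    {N t0 t1 t2 : ι → ℝ} (hN : Tendsto N l atTop)
    (ht0 : ∀ᶠ i in l, 0 < t0 i ∧ mulExpAdd m c (t0 i) = N i)
    (ht1 : ∀ᶠ i in l, 0 < t1 i ∧ mulExpAdd m c (t1 i) = N i + 1)
    (ht2 : ∀ᶠ i in l, 0 < t2 i ∧ mulExpAdd m c (t2 i) = N i + 2) :
    (fun i ↦ 1 / t0 i + 1 / t2 i - 2 / t1 i)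
      =O[l] (fun i ↦ 1 / (N i ^ 2 * Real.log (N i) ^ 2)) := by
  have hmono := strictMonoOn_mulExpAdd hm.le hc
  have one_le_t0 : ∀ᶠ i in l, 1 ≤ t0 i := by
    filter_upwards [ht0, hN.eventually_ge_atTop (mulExpAdd m c 1)] with i ⟨hpos, heq⟩ hi
    exact (hmono.le_iff_le (mem_Ici.2 zero_le_one) hpos.le).1 (hi.trans_eq heq.symm)
  have hdiff : (fun i ↦ 1 / t0 i + 1 / t2 i - 2 / t1 i) =O[l] fun i ↦ 1 / (N i * t0 i) ^ 2 := by
    refine IsBigO.of_bound (4 * (1 + m) * ((1 + c) / m) ^ 2 * 1 ^ 2) ?_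
    filter_upwards [ht0, ht1, ht2, one_le_t0] with i ⟨h0, hf0⟩ ⟨h1, hf1⟩ ⟨h2, hf2⟩ hone
    have h01 : t0 i < t1 i := (hmono.lt_iff_lt h0.le h1.le).1 (by linarith)
    have h12 : t1 i < t2 i := (hmono.lt_iff_lt h1.le h2.le).1 (by linarith)
    rw [Real.norm_eq_abs, Real.norm_of_nonneg (by positivity), ← hf0]
    exact abs_second_difference_inv_le_of_mulExpAdd hm hc hone h01 h12 (by linarith) (by linarith)
  have hlog : (fun i ↦ Real.log (N i)) =O[l] t0 := by
    refine IsBigO.of_bound (1 + m + c) ?_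
    filter_upwards [ht0, one_le_t0, hN.eventually_ge_atTop 1] with i ⟨hpos, heq⟩ hone hNi
    rw [Real.norm_of_nonneg (Real.log_nonneg hNi), Real.norm_of_nonneg hpos.le, ← heq]
    exact log_mulExpAdd_le hm.le hc hone
  have hlog_ne : ∀ᶠ i in l, N i * Real.log (N i) ≠ 0 := by
    filter_upwards [hN.eventually_gt_atTop 1] with i hi
    exact mul_ne_zero (zero_lt_one.trans hi).ne' (Real.log_pos hi).ne'
  have hinv : (fun i ↦ (N i * t0 i)⁻¹) =O[l] fun i ↦ (N i * Real.log (N i))⁻¹ :=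
    ((isBigO_refl N l).mul hlog).inv_rev (hlog_ne.mono fun _ hne h ↦ absurd h hne)
  refine hdiff.trans ?_
  simpa only [one_div, ← mul_pow, inv_pow] using hinv.pow 2

/-- If `t i` is the unique positive solution of `t·(e^{m·t} + c) = n + i`, then
`1/t_0 + 1/t_2 − 2/t_1 = O(1/(n²·log² n))` as `n → ∞`. -/
theorem stmt_14 (m c : ℕ) (hm : 0 < m) (t0 t1 t2 : ℕ → ℝ)
    (ht0 : ∀ n : ℕ, 2 ≤ n → 0 < t0 n ∧ t0 n * (Real.exp (m * t0 n) + c) = n)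
    (ht1 : ∀ n : ℕ, 2 ≤ n → 0 < t1 n ∧ t1 n * (Real.exp (m * t1 n) + c) = n + 1)
    (ht2 : ∀ n : ℕ, 2 ≤ n → 0 < t2 n ∧ t2 n * (Real.exp (m * t2 n) + c) = n + 2) :
    (fun n : ℕ => 1 / t0 n + 1 / t2 n - 2 / t1 n)
      =O[atTop] (fun n : ℕ => 1 / ((n : ℝ) ^ 2 * (Real.log n) ^ 2)) :=
  stmt_14_general (Nat.cast_pos.2 hm) c.cast_nonneg tendsto_natCast_atTop_atTop
    ((eventually_ge_atTop 2).mono ht0) ((eventually_ge_atTop 2).mono ht1)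
    ((eventually_ge_atTop 2).mono ht2)
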